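/- Let p ≥ 2 be even and q ≥ 2 with m = pq (the group G(m,p,2)). For 1 ≤ j ≤ p set ξ_j := [[Y, 2X^j],[2X^{p+1−j}, XY]], φ_j := [[Y, 2X^j],[2X^{p−j}, Y]], ψ_j := [[XY, −2X^{j+1}],[−2X^{p+1−j}, XY]]. Then there is an isomorphism of R-modules S/(z) ≅ (⊕_{j=1}^{p} Coker(ξ_j)^{2(q−1)}) ⊕ (⊕_{j=1}^{(p−2)/2} Coker(ψ_j)^{2}) ⊕ (⊕_{j=1}^{(p−2)/2} Coker(φ_j)^{2(q−1)²}) ⊕ Coker(φ_{p/2})^{2·binom(q−1,2)} ⊕ R/(X) ⊕ (R/(Y² − 4X^p))^{(q−1) + 2·binom(q−1,2)} ⊕ R/(X(Y + 2X^{p/2})) ⊕ R/(X(Y − 2X^{p/2})) ⊕ (R/(Y − 2X^{p/2}))^{q−1} ⊕ (R/(Y + 2X^{p/2}))^{q−1} ⊕ R/(X(Y² − 4X^p)), where M^{k} denotes the direct sum of k copies of the module M. -/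

import Mathlib

/-!
The idea is to decompose `S` under the diagonal subgroup of `G(m,p,2)`, where `m = pq`. That is a
grading of `S` by `ℤ/m × ℤ/q`, with `x` of weight `(1, 0)` and `y` of weight `(-1, 1)`, for which
`φ(R)` has weight `0`. Each graded piece is free of rank 2 over `R`, with basis
`(xy)^r x^d`, `(xy)^s y^(m-d)`, where `0 ≤ r, s < q`, `0 ≤ d < m` and `d + r = kq + s`
(`span_induct` for generation, `Phi_inj` for freeness). Freeness follows from the symmetry
`x ↔ y`, which fixes `φ(R)`: the determinant of the basis and its image is
`(xy)^(r+s) (x^m - y^m) ≠ 0`.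

Multiplication by `z` sends each graded piece to another one, so `S/(z)` is the direct sum over
`(r, s, k)` of the cokernels of the 2×2 matrices `MM p r s k` of these maps (`main_iso`). Here
`0 ≤ k < p` if `r ≤ s`, and `1 ≤ k ≤ p` if `s < r`. The cases are:
* `r = s = 0`: the matrices `ψ_k`, `0 ≤ k < p`;
* exactly one of `r, s` zero: every `ξ_j` with `1 ≤ j ≤ p` occurs once for each of the `2(q-1)`
  possible pairs `(r, s)`;
* `r, s > 0`: the matrices `φ_k`, `0 ≤ k < p`, once for each of the `(q-1)²` pairs `(r, s)`.

Exchanging the basis vectors identifies `φ_k` with `φ_(p-k)` and `ψ_k` with `ψ_(p-k)`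
(`iso_palindrome`). For `k = 0` an entry (up to the factor `X` in the case of `ψ`) is a unit, and
for `k = p/2` the matrix is symmetric of the form `[[a, b], [b, a]]`; in both cases the cokernel
splits into cyclic modules (`coker_unit`, `coker_sym`). Counting multiplicities, with
`(q-1)² = 2·binom(q-1,2) + (q-1)`, gives the result.
-/

open MvPolynomial

noncomputable section

/-- `S = ℂ[x,y]` -/
abbrev Spoly : Type := MvPolynomial Bool ℂ

/-- `R = ℂ[X,Y]` -/
abbrev Rpoly : Type := MvPolynomial (Fin 2) ℂ

def xv : Spoly := X false
def yv : Spoly := X true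
def Xv : Rpoly := X 0
def Yv : Rpoly := X 1

/-- The map `R → S`, `X ↦ (xy)^q`, `Y ↦ x^m + y^m`. -/
def phi (m q : ℕ) : Rpoly →+* Spoly :=
  (aeval ![(xv * yv) ^ q, xv ^ m + yv ^ m]).toRingHom

/-- `z = xy(x^m - y^m)`. -/
def zpol (m : ℕ) : Spoly := xv * yv * (xv ^ m - yv ^ m)

/-- Cokernel of a 2×2 matrix over `R`. -/
abbrev coker (A : Matrix (Fin 2) (Fin 2) Rpoly) : Type :=
  (Fin 2 → Rpoly) ⧸ LinearMap.range A.mulVecLin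

/-- `ξ_j` -/
def xiM (p j : ℕ) : Matrix (Fin 2) (Fin 2) Rpoly :=
  !![Yv, 2 * Xv ^ j; 2 * Xv ^ (p + 1 - j), Xv * Yv]

/-- `φ_j` -/
def phiM (p j : ℕ) : Matrix (Fin 2) (Fin 2) Rpoly :=
  !![Yv, 2 * Xv ^ j; 2 * Xv ^ (p - j), Yv]

/-- `ψ_j` -/
def psiM (p j : ℕ) : Matrix (Fin 2) (Fin 2) Rpoly :=
  !![Xv * Yv, -2 * Xv ^ (j + 1); -2 * Xv ^ (p + 1 - j), Xv * Yv]

/-! ### Monomial bases -/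

/-- Index set for the graded pieces of `S`: triples `(r, s, k')`, where `k'` determines the
quotient `k` of `kk`. -/
abbrev Idx (p q : ℕ) : Type := Fin q × Fin q × Fin p

/-- The integer `k` with `d + r = kq + s`. The condition `0 ≤ d < pq` forces `0 ≤ k < p` if `r ≤ s`
and `1 ≤ k ≤ p` if `s < r`, hence the shift by one in the second case. -/
def kk {p q : ℕ} (i : Idx p q) : ℕ := i.2.2 + if (i.2.1 : ℕ) < i.1 then 1 else 0

/-- The exponent `d = kq + s - r`; by `dd_add` the subtraction never truncates. -/
def dd {p q : ℕ} (i : Idx p q) : ℕ := kk i * q + i.2.1 - i.1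

lemma dd_add {p q : ℕ} (i : Idx p q) : dd i + i.1 = kk i * q + i.2.1 := by
  obtain ⟨r, s, k⟩ := i
  have hr := r.2
  unfold dd kk
  dsimp only
  split_ifs with h
  · have : (k + 1 : ℕ) * q = k * q + q := by ring
    omega
  · omega

lemma dd_lt {p q : ℕ} (i : Idx p q) : dd i < p * q := by
  have h := dd_add i
  obtain ⟨r, s, k⟩ := i
  have hr := r.2
  have hs := s.2
  have hk : ((k : ℕ) + 1) * q ≤ p * q := Nat.mul_le_mul_right q k.2
  have : (k + 1 : ℕ) * q = k * q + q := by ring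
  unfold kk at h
  dsimp only at h
  split_ifs at h
  · rw [this] at h
    omega
  · rw [add_zero] at h
    omega

lemma kk_le {p q : ℕ} (i : Idx p q) : kk i ≤ p := by
  unfold kk
  have := i.2.2.2
  split_ifs <;> omega

lemma exists_idx {p q r s K d : ℕ} (hr : r < q) (hs : s < q) (hd : d < p * q)
    (h : d + r = K * q + s) :
    ∃ i : Idx p q, (i.1 : ℕ) = r ∧ (i.2.1 : ℕ) = s ∧ kk i = K ∧ dd i = d := by
  have key : ∃ k' < p, k' + (if s < r then 1 else 0) = K := by
    split_ifs with hsr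
    · have hK : K ≠ 0 := by rintro rfl; omega
      obtain ⟨k, rfl⟩ := Nat.exists_eq_succ_of_ne_zero hK
      refine ⟨k, ?_, rfl⟩
      by_contra hc
      have := Nat.mul_le_mul_right q (not_lt.mp hc)
      have : (k.succ) * q = k * q + q := by rw [Nat.succ_mul]
      omega
    · refine ⟨K, ?_, rfl⟩
      by_contra hc
      have := Nat.mul_le_mul_right q (not_lt.mp hc)
      omega
  obtain ⟨k', hk', hK⟩ := key
  have hK' : kk ((⟨r, hr⟩, ⟨s, hs⟩, ⟨k', hk'⟩) : Idx p q) = K := hK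
  refine ⟨(⟨r, hr⟩, ⟨s, hs⟩, ⟨k', hk'⟩), rfl, rfl, hK', ?_⟩
  have := dd_add ((⟨r, hr⟩, ⟨s, hs⟩, ⟨k', hk'⟩) : Idx p q)
  rw [hK'] at this
  dsimp only at this
  omega

/-- Every monomial `(xy)^r x^d` with `r < q`, `d < m` is the first basis vector of some piece. -/
lemma exists_idx_left {p q r d : ℕ} (hr : r < q) (hd : d < p * q) :
    ∃ i : Idx p q, (i.1 : ℕ) = r ∧ dd i = d := by
  have hq : 0 < q := by omega
  obtain ⟨i, h1, -, -, h4⟩ := exists_idx (K := (d + r) / q) hr (Nat.mod_lt (d + r) hq) hd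
    (by rw [mul_comm]; exact (Nat.div_add_mod _ _).symm)
  exact ⟨i, h1, h4⟩

/-- Every monomial `(xy)^s y^t` with `s < q`, `0 < t ≤ m` is the second basis vector of some
piece. -/
lemma exists_idx_right {p q s t : ℕ} (hs : s < q) (ht : 0 < t) (htm : t ≤ p * q) :
    ∃ i : Idx p q, (i.2.1 : ℕ) = s ∧ p * q - dd i = t := by
  have hq : 0 < q := by omega
  have h1 := Nat.div_add_mod (s + t) q
  have hu : (s + t) / q ≤ p := by
    by_contra hc
    have := Nat.mul_le_mul_right q (Nat.succ_le_of_lt (not_le.mp hc))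
    rw [mul_comm _ q] at this
    have : q * p.succ = p * q + q := by rw [Nat.mul_succ, mul_comm]
    have := Nat.mod_lt (s + t) hq
    lia
  obtain ⟨w, hw⟩ := Nat.exists_eq_add_of_le hu
  have hpq : p * q = q * ((s + t) / q) + w * q := by
    conv_lhs => rw [hw]
    ring
  obtain ⟨i, -, h2, -, h4⟩ := exists_idx (p := p) (d := p * q - t) (K := w)
    (Nat.mod_lt (s + t) hq) hs (by omega) (by omega)
  exact ⟨i, h2, by omega⟩

/-- The first basis vector `(xy)^r x^d` of a graded piece. -/
def EE {p q : ℕ} (i : Idx p q) : Spoly := (xv * yv) ^ (i.1 : ℕ) * xv ^ dd i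

/-- The second basis vector `(xy)^s y^(m-d)` of a graded piece, with `m = pq`. -/
def FF {p q : ℕ} (i : Idx p q) : Spoly := (xv * yv) ^ (i.2.1 : ℕ) * yv ^ (p * q - dd i)

lemma phi_X (m q : ℕ) : phi m q Xv = (xv * yv) ^ q := by
  simp [phi, Xv]

lemma phi_Y (m q : ℕ) : phi m q Yv = xv ^ m + yv ^ m := by
  simp [phi, Yv]

/-- Induction principle expressing that the monomials `(xy)^r x^d` with `r < q`, `d < m` and
`(xy)^s y^t` with `s < q`, `0 < t ≤ m` generate `S` as an `R`-module. -/
lemma span_induct {m q : ℕ} (hm : 0 < m) (hq : 0 < q) (P : Spoly → Prop)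
    (hadd : ∀ a b, P a → P b → P (a + b)) (hmul : ∀ c a, P a → P (phi m q c * a))
    (hE : ∀ r d, r < q → d < m → P ((xv * yv) ^ r * xv ^ d))
    (hF : ∀ s t, s < q → 0 < t → t ≤ m → P ((xv * yv) ^ s * yv ^ t)) (s : Spoly) : P s := by
  have hx : ∀ a d, d < m → P ((xv * yv) ^ a * xv ^ d) := by
    intro a d hd
    have : (xv * yv) ^ a * xv ^ d = phi m q (Xv ^ (a / q)) * ((xv * yv) ^ (a % q) * xv ^ d) := by
      rw [map_pow, phi_X, ← pow_mul, ← mul_assoc, ← pow_add, Nat.div_add_mod]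
    rw [this]
    exact hmul _ _ (hE _ _ (Nat.mod_lt _ hq) hd)
  have hy : ∀ a d, 0 < d → d ≤ m → P ((xv * yv) ^ a * yv ^ d) := by
    intro a d hd hd'
    have : (xv * yv) ^ a * yv ^ d = phi m q (Xv ^ (a / q)) * ((xv * yv) ^ (a % q) * yv ^ d) := by
      rw [map_pow, phi_X, ← pow_mul, ← mul_assoc, ← pow_add, Nat.div_add_mod]
    rw [this]
    exact hmul _ _ (hF _ _ (Nat.mod_lt _ hq) hd hd')
  have hsub : ∀ a b, P a → P b → P (phi m q Yv * a - b) := by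
    intro a b ha hb
    have := hadd _ _ (hmul Yv a ha) (hmul (-1) b hb)
    rw [map_neg, map_one] at this
    convert this using 1
    ring
  -- strong induction on the distance `d` of the exponent to the diagonal, for both sides at once
  have key : ∀ d, (∀ a, P ((xv * yv) ^ a * xv ^ d)) ∧ (∀ a, P ((xv * yv) ^ a * yv ^ d)) := by
    intro d
    induction d using Nat.strong_induction_on with
    | _ d ih =>
      have hyd : ∀ a, d ≤ m → P ((xv * yv) ^ a * yv ^ d) := by
        intro a hdm
        rcases Nat.eq_zero_or_pos d with rfl | hd
        · simpa using hx a 0 hm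
        · exact hy a d hd hdm
      rcases lt_trichotomy d m with hlt | rfl | hgt
      · exact ⟨fun a => hx a d hlt, fun a => hyd a hlt.le⟩
      · refine ⟨fun a => ?_, fun a => hyd a le_rfl⟩
        have := hsub _ _ (hx a 0 hm) (hy a d hm le_rfl)
        rw [phi_Y] at this
        convert this using 1
        ring
      · -- `x^(e+m) = Y x^e - x^e y^m`, and the last monomial is closer to the diagonal
        obtain ⟨e, rfl⟩ : ∃ e, d = e + m := ⟨d - m, by omega⟩
        rcases le_total e m with hem | hem
        · obtain ⟨f, rfl⟩ := Nat.exists_eq_add_of_le hem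
          constructor
          · intro a
            have := hsub _ _ ((ih e (by omega)).1 a) ((ih f (by omega)).2 (a + e))
            rw [phi_Y] at this
            convert this using 1
            ring
          · intro a
            have := hsub _ _ ((ih e (by omega)).2 a) ((ih f (by omega)).1 (a + e))
            rw [phi_Y] at this
            convert this using 1
            ring
        · obtain ⟨f, rfl⟩ := Nat.exists_eq_add_of_le hem
          constructor
          · intro a
            have := hsub _ _ ((ih (m + f) (by omega)).1 a) ((ih f (by omega)).1 (a + m))
            rw [phi_Y] at this
            convert this using 1
            ring
          · intro a
            have := hsub _ _ ((ih (m + f) (by omega)).2 a) ((ih f (by omega)).2 (a + m))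
            rw [phi_Y] at this
            convert this using 1
            ring
  have hmon : ∀ a b, P (xv ^ a * yv ^ b) := by
    intro a b
    rcases le_total a b with hab | hab
    · obtain ⟨f, rfl⟩ := Nat.exists_eq_add_of_le hab
      have := (key f).2 a
      convert this using 1
      ring
    · obtain ⟨f, rfl⟩ := Nat.exists_eq_add_of_le hab
      have := (key f).1 b
      convert this using 1
      ring
  induction s using MvPolynomial.induction_on' with
  | add a b ha hb => exact hadd _ _ ha hb
  | monomial u c =>
    have := hmul (C c) _ (hmon (u false) (u true))
    convert this using 1
    have : phi m q (C c) = C c := by simp [phi]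
    rw [this, MvPolynomial.monomial_eq, Finsupp.prod_fintype _ _ (by simp)]
    simp [xv, yv, mul_comm]

/-- `(xy)^q` and `x^m + y^m` are algebraically independent: the map `ℂ² → ℂ²` they define hits
every point with non-zero first coordinate, so `X g` vanishes identically if `φ(g) = 0`. -/
lemma phi_inj {p q : ℕ} (hp : 0 < p) (hq : 0 < q) (g : Rpoly) (hg : phi (p * q) q g = 0) :
    g = 0 := by
  have hX : (Xv : Rpoly) ≠ 0 := X_ne_zero _
  refine (mul_eq_zero.mp ?_).resolve_left hX
  apply MvPolynomial.funext
  intro a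
  rw [map_zero, map_mul]
  rcases eq_or_ne (a 0) 0 with ha | ha
  · simp [Xv, ha]
  -- the fibre over `(a 0, a 1)` is non-empty: solve `u + v = a 1`, `u v = (a 0)^p`
  obtain ⟨c, hc⟩ := IsAlgClosed.exists_pow_nat_eq (a 0) hq
  obtain ⟨w, hw⟩ := IsAlgClosed.exists_pow_nat_eq ((a 1) ^ 2 - 4 * (a 0) ^ p) (n := 2) (by norm_num)
  have huv : ((a 1 + w) / 2) * ((a 1 - w) / 2) = (a 0) ^ p := by linear_combination -hw / 4
  have hap : (a 0) ^ p ≠ 0 := pow_ne_zero _ ha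
  have hu : (a 1 + w) / 2 ≠ 0 := by
    intro h
    rw [h, zero_mul] at huv
    exact hap huv.symm
  obtain ⟨x, hx⟩ := IsAlgClosed.exists_pow_nat_eq ((a 1 + w) / 2) (Nat.mul_pos hp hq)
  have hx0 : x ≠ 0 := by
    rintro rfl
    rw [zero_pow (Nat.mul_pos hp hq).ne'] at hx
    exact hu hx.symm
  have hy : (c / x) ^ (p * q) = (a 1 - w) / 2 := by
    rw [div_pow, hx, div_eq_iff hu, mul_comm p q, pow_mul, hc, ← huv]
    ring
  have hev : ∀ f : Rpoly, eval (fun b => cond b (c / x) x) (phi (p * q) q f) = eval a f := by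
    intro f
    have : ((eval (fun b => cond b (c / x) x)).comp (phi (p * q) q)) = eval a := by
      apply MvPolynomial.ringHom_ext
      · intro r; simp [phi]
      · intro i
        fin_cases i
        · change eval _ (phi (p * q) q Xv) = _
          rw [phi_X]
          simp [xv, yv, mul_div_cancel₀ _ hx0, hc]
        · change eval _ (phi (p * q) q Yv) = _
          rw [phi_Y]
          simp [xv, yv, hx, hy]
          ring
    rw [← this]; rfl
  rw [← hev g, hg]
  simp

/-- Weights in the character group `ℤ/m × ℤ/q` of the diagonal subgroup of `G(m,p,2)`:
`x` has weight `(1, 0)` and `y` has weight `(-1, 1)`. -/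
def wt (m q : ℕ) : Bool → ZMod m × ZMod q := fun b => cond b (-1, 1) (1, 0)

lemma wt_x (m q : ℕ) : IsWeightedHomogeneous (wt m q) xv (1, 0) := isWeightedHomogeneous_X ℂ _ false

lemma wt_y (m q : ℕ) : IsWeightedHomogeneous (wt m q) yv (-1, 1) := isWeightedHomogeneous_X ℂ _ true

lemma wt_phi {m q : ℕ} (hqm : q ∣ m) (g : Rpoly) :
    IsWeightedHomogeneous (wt m q) (phi m q g) 0 := by
  induction g using MvPolynomial.induction_on with
  | C a =>
    have : phi m q (C a) = C a := by simp [phi]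
    rw [this]
    exact isWeightedHomogeneous_C _ _
  | add a b ha hb => rw [map_add]; exact ha.add hb
  | mul_X a i ha =>
    rw [map_mul]
    rw [← add_zero (0 : ZMod m × ZMod q)]
    refine ha.mul ?_
    fin_cases i
    · change IsWeightedHomogeneous _ (phi m q Xv) _
      rw [phi_X]
      convert ((wt_x m q).mul (wt_y m q)).pow q using 1
      ext <;> simp
    · change IsWeightedHomogeneous _ (phi m q Yv) _
      rw [phi_Y]
      refine IsWeightedHomogeneous.add ?_ ?_
      · convert (wt_x m q).pow m using 1
        ext <;> simp
      · convert (wt_y m q).pow m using 1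
        have : (m : ZMod q) = 0 := (ZMod.natCast_eq_zero_iff _ _).mpr hqm
        ext <;> simp [this]

lemma wt_E {p q : ℕ} (i : Idx p q) :
    IsWeightedHomogeneous (wt (p * q) q) (EE i) ((dd i : ZMod (p * q)), ((i.1 : ℕ) : ZMod q)) := by
  have h := (((wt_x (p * q) q).mul (wt_y _ q)).pow (i.1 : ℕ)).mul ((wt_x _ q).pow (dd i))
  convert h using 1
  · rfl
  · ext <;> simp

lemma wt_F {p q : ℕ} (i : Idx p q) :
    IsWeightedHomogeneous (wt (p * q) q) (FF i) ((dd i : ZMod (p * q)), ((i.1 : ℕ) : ZMod q)) := by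
  have h0 := (((wt_x (p * q) q).mul (wt_y _ q)).pow (i.2.1 : ℕ)).mul
    ((wt_y _ q).pow (p * q - dd i))
  convert h0 using 1
  · rfl
  have h := dd_add i
  have h' := congrArg (Nat.cast : ℕ → ZMod q) h
  push_cast at h'
  have h1 := (dd_lt i).le
  ext
  · simp [Nat.cast_sub h1, -Nat.cast_mul]
  · simp [Nat.cast_sub h1]
    simp at h'
    linear_combination h'

lemma wt_injective {p q : ℕ} : Function.Injective
    (fun i : Idx p q => ((dd i : ZMod (p * q)), ((i.1 : ℕ) : ZMod q))) := by
  intro i j hij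
  simp only [Prod.mk.injEq] at hij
  obtain ⟨h1, h2⟩ := hij
  rw [ZMod.natCast_eq_natCast_iff] at h1 h2
  have h1 := h1.eq_of_lt_of_lt (dd_lt i) (dd_lt j)
  have h2 := h2.eq_of_lt_of_lt i.1.2 j.1.2
  have hi := dd_add i
  have hj := dd_add j
  rw [h1, h2, hj] at hi
  have hs : (i.2.1 : ℕ) = j.2.1 := by
    have := congrArg (· % q) hi
    simpa [Nat.mod_eq_of_lt, Nat.mul_add_mod'] using this.symm
  have hq : 0 < q := by have := i.1.2; omega
  have hk : kk i = kk j := by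
    rw [hs] at hi
    exact (Nat.eq_of_mul_eq_mul_right hq (by omega))
  unfold kk at hk
  rw [hs, h2] at hk
  ext
  · exact h2
  · exact hs
  · exact Nat.add_right_cancel hk

/-- The `R`-linear map `(R²)^I → S` given by the bases `EE i`, `-FF i`. With this sign the matrices
of multiplication by `z` have no negative entries. -/
def Phi (p q : ℕ) (v : Idx p q → Fin 2 → Rpoly) : Spoly :=
  ∑ i, (phi (p * q) q (v i 0) * EE i - phi (p * q) q (v i 1) * FF i)

lemma Phi_add (p q : ℕ) (v w) : Phi p q (v + w) = Phi p q v + Phi p q w := by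
  simp only [Phi, ← Finset.sum_add_distrib]
  refine Finset.sum_congr rfl fun i _ => ?_
  simp only [Pi.add_apply, map_add]
  ring

lemma Phi_smul (p q : ℕ) (c : Rpoly) (v) : Phi p q (c • v) = phi (p * q) q c * Phi p q v := by
  simp only [Phi, Finset.mul_sum]
  refine Finset.sum_congr rfl fun i _ => ?_
  simp only [Pi.smul_apply, smul_eq_mul, map_mul]
  ring

lemma Phi_zero (p q : ℕ) : Phi p q 0 = 0 := by
  simp [Phi]

lemma Phi_single (p q : ℕ) (i : Idx p q) (u : Fin 2 → Rpoly) :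
    Phi p q (Pi.single i u) = phi (p * q) q (u 0) * EE i - phi (p * q) q (u 1) * FF i := by
  unfold Phi
  rw [Finset.sum_eq_single i]
  · simp
  · intro j _ hj
    simp [Pi.single_eq_of_ne hj]
  · simp

/-- The weights of the pieces are distinct, so a relation splits into relations
`g * EE i = h * FF i`; combining one with its image under `x ↔ y` gives `g = h = 0`. -/
lemma Phi_inj {p q : ℕ} (hp : 0 < p) (hq : 0 < q) (v) (h : Phi p q v = 0) : v = 0 := by
  have hterm : ∀ i : Idx p q,
      phi (p * q) q (v i 0) * EE i - phi (p * q) q (v i 1) * FF i = 0 := by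
    intro i
    have hh : ∀ j : Idx p q, IsWeightedHomogeneous (wt (p * q) q)
        (phi (p * q) q (v j 0) * EE j - phi (p * q) q (v j 1) * FF j)
        ((dd j : ZMod (p * q)), ((j.1 : ℕ) : ZMod q)) := by
      intro j
      have hqm : q ∣ p * q := dvd_mul_left _ _
      have h1 := (wt_phi hqm (v j 0)).mul (wt_E j)
      have h2 := (wt_phi hqm (-v j 1)).mul (wt_F j)
      rw [zero_add] at h1 h2
      convert h1.add h2 using 1
      rw [map_neg]
      ring
    have h1 := congrArg (weightedHomogeneousComponent (wt (p * q) q)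
      ((dd i : ZMod (p * q)), ((i.1 : ℕ) : ZMod q))) h
    rw [Phi, map_sum, map_zero, Finset.sum_eq_single i] at h1
    · rwa [(hh i).weightedHomogeneousComponent_same] at h1
    · intro j _ hj
      refine (hh j).weightedHomogeneousComponent_ne _ ?_
      exact fun h' => hj (wt_injective h'.symm)
    · simp
  have hm : p * q ≠ 0 := (Nat.mul_pos hp hq).ne'
  -- apply the symmetry exchanging `x` and `y`, which fixes `φ(R)`
  have hsw : ∀ g, rename not (phi (p * q) q g) = phi (p * q) q g := by
    intro g
    have : ((rename (R := ℂ) not).toRingHom.comp (phi (p * q) q)) = phi (p * q) q := by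
      apply MvPolynomial.ringHom_ext
      · intro r; simp [phi]
      · intro i
        fin_cases i
        · change rename not (phi (p * q) q Xv) = phi (p * q) q Xv
          rw [phi_X]
          simp [xv, yv, mul_comm]
        · change rename not (phi (p * q) q Yv) = phi (p * q) q Yv
          rw [phi_Y]
          simp [xv, yv, add_comm]
    exact congrArg (fun f => f g) this
  have hxy : (xv * yv : Spoly) ≠ 0 := mul_ne_zero (X_ne_zero _) (X_ne_zero _)
  have hdiff : (xv ^ (p * q) - yv ^ (p * q) : Spoly) ≠ 0 := by
    intro h0
    have := congrArg (eval (fun b => cond b (0 : ℂ) 1)) h0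
    simp [xv, yv, hm] at this
  have hx' : rename not xv = yv := by simp [xv, yv]
  have hy' : rename not yv = xv := by simp [xv, yv]
  funext i
  have h1 := hterm i
  have h2 := congrArg (rename not) h1
  simp only [EE, FF] at h1
  simp only [EE, FF, map_sub, map_mul, map_pow, hsw, hx', hy', map_zero] at h2
  obtain ⟨t, ht⟩ := Nat.exists_eq_add_of_le (dd_lt i).le
  have ht' : p * q - dd i = t := by omega
  rw [ht'] at h1 h2
  have hxm : xv ^ (p * q) = xv ^ dd i * xv ^ t := by rw [← pow_add, ← ht]
  have hym : yv ^ (p * q) = yv ^ dd i * yv ^ t := by rw [← pow_add, ← ht]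
  have hne : (xv * yv) ^ ((i.1 : ℕ) + i.2.1) * (xv ^ (p * q) - yv ^ (p * q)) ≠ 0 :=
    mul_ne_zero (pow_ne_zero _ hxy) hdiff
  have e0 : phi (p * q) q (v i 0) = 0 := by
    refine (mul_eq_zero.mp ?_).resolve_right hne
    rw [hxm, hym, pow_add (xv * yv)]
    rw [mul_comm yv xv] at h2
    linear_combination (xv * yv) ^ (i.2.1 : ℕ) * xv ^ t * h1 - (xv * yv) ^ (i.2.1 : ℕ) * yv ^ t * h2
  have e1 : phi (p * q) q (v i 1) = 0 := by
    refine (mul_eq_zero.mp ?_).resolve_right hne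
    rw [hxm, hym, pow_add (xv * yv)]
    rw [mul_comm yv xv] at h2
    linear_combination (xv * yv) ^ (i.1 : ℕ) * yv ^ dd i * h1 - (xv * yv) ^ (i.1 : ℕ) * xv ^ dd i * h2
  funext l
  fin_cases l
  · exact phi_inj hp hq _ e0
  · exact phi_inj hp hq _ e1

/-! ### Multiplication by `z` in the monomial basis -/

/-- `1` if `r = 0`, and `0` otherwise: the power of `X = (xy)^q` produced when the exponent of `xy`
passes from `q - 1` to `q`. -/
def ee (r : ℕ) : ℕ := if r = 0 then 1 else 0

/-- The matrix of multiplication by `z` into the graded piece with parameters `(r, s, k)`, from the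
piece with `r - 1`, `s - 1` (taken modulo `q`) and the same `d`. -/
def MM (p : ℕ) (r s k : ℕ) : Matrix (Fin 2) (Fin 2) Rpoly :=
  !![Yv * Xv ^ ee r, 2 * Xv ^ (ee s + (p - k)); 2 * Xv ^ (ee r + k), Yv * Xv ^ ee s]

lemma z_mul_E {p q a : ℕ} (i : Idx p q) (ha : a + 1 = q * ee i.1 + i.1) :
    zpol (p * q) * ((xv * yv) ^ a * xv ^ dd i) =
      Phi p q (Pi.single i (fun l => MM p i.1 i.2.1 (kk i) l 0)) := by
  rw [Phi_single]
  obtain ⟨t, ht⟩ := Nat.exists_eq_add_of_le (dd_lt i).le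
  have ht' : p * q - dd i = t := by omega
  have hym : yv ^ (p * q) = yv ^ dd i * yv ^ t := by rw [← pow_add, ← ht]
  have h := dd_add i
  have h1 : (xv * yv) ^ (kk i * q) * (xv * yv) ^ (i.2.1 : ℕ) =
      (xv * yv) ^ dd i * (xv * yv) ^ (i.1 : ℕ) := by rw [← pow_add, ← pow_add, h]
  have h2 : (xv * yv) ^ a * (xv * yv) = (xv * yv) ^ (q * ee i.1) * (xv * yv) ^ (i.1 : ℕ) := by
    rw [← pow_succ, ha, pow_add]
  simp only [MM, EE, FF, ht', zpol, Matrix.of_apply, Matrix.cons_val', Matrix.cons_val_zero,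
    Matrix.cons_val_one, map_mul, map_pow, phi_X, phi_Y, map_ofNat, hym, ← pow_mul,
    pow_add, mul_comm q (kk i)]
  rw [mul_pow xv yv (dd i)] at h1
  linear_combination (xv ^ (p * q) - yv ^ dd i * yv ^ t) * xv ^ dd i * h2 +
    2 * (xv * yv) ^ (q * ee i.1) * yv ^ t * h1

lemma z_mul_F {p q b : ℕ} (i : Idx p q) (hb : b + 1 = q * ee i.2.1 + i.2.1) :
    zpol (p * q) * ((xv * yv) ^ b * yv ^ (p * q - dd i)) =
      Phi p q (Pi.single i (fun l => MM p i.1 i.2.1 (kk i) l 1)) := by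
  rw [Phi_single]
  obtain ⟨t, ht⟩ := Nat.exists_eq_add_of_le (dd_lt i).le
  have ht' : p * q - dd i = t := by omega
  have hxm : xv ^ (p * q) = xv ^ dd i * xv ^ t := by rw [← pow_add, ← ht]
  have h := dd_add i
  have h1 : (xv * yv) ^ (q * (p - kk i)) * (xv * yv) ^ (i.1 : ℕ) =
      (xv * yv) ^ t * (xv * yv) ^ (i.2.1 : ℕ) := by
    rw [← pow_add, ← pow_add]
    congr 1
    obtain ⟨w, hw⟩ := Nat.exists_eq_add_of_le (kk_le i)
    have hw' : p - kk i = w := by omega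
    have : p * q = kk i * q + q * w := by
      conv_lhs => rw [hw]
      ring
    rw [hw']
    omega
  have h2 : (xv * yv) ^ b * (xv * yv) = (xv * yv) ^ (q * ee i.2.1) * (xv * yv) ^ (i.2.1 : ℕ) := by
    rw [← pow_succ, hb, pow_add]
  simp only [MM, EE, FF, ht', zpol, Matrix.of_apply, Matrix.cons_val', Matrix.cons_val_zero,
    Matrix.cons_val_one, map_mul, map_pow, phi_X, phi_Y, map_ofNat, hxm, ← pow_mul,
    pow_add]
  rw [mul_pow xv yv t] at h1
  linear_combination (xv ^ dd i * xv ^ t - yv ^ (p * q)) * yv ^ t * h2 -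
    2 * (xv * yv) ^ (q * ee i.2.1) * xv ^ dd i * h1

lemma ee_zero : ee 0 = 1 := rfl

lemma ee_succ (n : ℕ) : ee (n + 1) = 0 := rfl

/-- `r` is `a + 1` reduced modulo `q`. -/
lemma exists_pred {q a : ℕ} (ha : a < q) : ∃ r < q, a + 1 = q * ee r + r := by
  by_cases h : a + 1 < q
  · exact ⟨a + 1, h, by simp [ee_succ]⟩
  · exact ⟨0, by omega, by simp [ee_zero]; omega⟩

lemma Phi_surj {p q : ℕ} (hp : 0 < p) (hq : 0 < q) (s : Spoly) : ∃ v, Phi p q v = s := by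
  refine span_induct (m := p * q) (q := q) (Nat.mul_pos hp hq) hq (fun s => ∃ v, Phi p q v = s)
    ?_ ?_ ?_ ?_ s
  · rintro _ _ ⟨v, rfl⟩ ⟨w, rfl⟩
    exact ⟨v + w, Phi_add _ _ _ _⟩
  · rintro c _ ⟨v, rfl⟩
    exact ⟨c • v, Phi_smul _ _ _ _⟩
  · intro r d hr hd
    obtain ⟨i, rfl, rfl⟩ := exists_idx_left hr hd
    exact ⟨Pi.single i ![1, 0], by simp [Phi_single, EE]⟩
  · intro s t hs ht htm
    obtain ⟨i, rfl, rfl⟩ := exists_idx_right hs ht htm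
    exact ⟨Pi.single i ![0, -1], by simp [Phi_single, FF]⟩

/-- The ideal `(z)` is contained in the sum of the ranges of the matrices `MM`. -/
lemma z_mul_mem {p q : ℕ} (hp : 0 < p) (hq : 0 < q) (s : Spoly) :
    ∃ v, (∀ i : Idx p q, v i ∈ LinearMap.range (MM p i.1 i.2.1 (kk i)).mulVecLin) ∧
      Phi p q v = zpol (p * q) * s := by
  have hcol : ∀ (i : Idx p q) (l : Fin 2) (j : Idx p q),
      (Pi.single i (fun l' => MM p i.1 i.2.1 (kk i) l' l) : Idx p q → Fin 2 → Rpoly) j ∈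
        LinearMap.range (MM p j.1 j.2.1 (kk j)).mulVecLin := by
    intro i l j
    by_cases h : j = i
    · subst h
      rw [Pi.single_eq_same]
      exact ⟨Pi.single l 1, by simp; rfl⟩
    · rw [Pi.single_eq_of_ne h]
      exact Submodule.zero_mem _
  refine span_induct (m := p * q) (q := q) (Nat.mul_pos hp hq) hq
    (fun s => ∃ v, (∀ i : Idx p q, v i ∈ LinearMap.range (MM p i.1 i.2.1 (kk i)).mulVecLin) ∧
      Phi p q v = zpol (p * q) * s) ?_ ?_ ?_ ?_ s
  · rintro a b ⟨v, hv, hv'⟩ ⟨w, hw, hw'⟩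
    exact ⟨v + w, fun i => Submodule.add_mem _ (hv i) (hw i), by rw [Phi_add, hv', hw', mul_add]⟩
  · rintro c a ⟨v, hv, hv'⟩
    exact ⟨c • v, fun i => Submodule.smul_mem _ c (hv i), by rw [Phi_smul, hv', mul_left_comm]⟩
  · intro a d ha hd
    obtain ⟨r, hr, har⟩ := exists_pred ha
    obtain ⟨i, rfl, rfl⟩ := exists_idx_left hr hd
    exact ⟨_, hcol i 0, (z_mul_E i har).symm⟩
  · intro b t hb ht htm
    obtain ⟨s, hs, hbs⟩ := exists_pred hb
    obtain ⟨i, rfl, rfl⟩ := exists_idx_right hs ht htm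
    exact ⟨_, hcol i 1, (z_mul_F i hbs).symm⟩

lemma Phi_mem {p q : ℕ} (hq : 0 < q) (v)
    (hv : ∀ i : Idx p q, v i ∈ LinearMap.range (MM p i.1 i.2.1 (kk i)).mulVecLin) :
    zpol (p * q) ∣ Phi p q v := by
  choose w hw using hv
  unfold Phi
  refine Finset.dvd_sum fun i _ => ?_
  have hsucc : ∀ r < q, ∃ a, a + 1 = q * ee r + r := by
    intro r hr
    rcases r with _ | r
    · exact ⟨q - 1, by simp [ee_zero]; omega⟩
    · exact ⟨r, by simp [ee_succ]⟩
  obtain ⟨a, ha⟩ := hsucc _ i.1.2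
  obtain ⟨b, hb⟩ := hsucc _ i.2.1.2
  have hE := z_mul_E i ha
  have hF := z_mul_F i hb
  rw [Phi_single] at hE hF
  refine ⟨phi (p * q) q (w i 0) * ((xv * yv) ^ a * xv ^ dd i) +
    phi (p * q) q (w i 1) * ((xv * yv) ^ b * yv ^ (p * q - dd i)), ?_⟩
  rw [mul_add, mul_left_comm, hE, mul_left_comm, hF, ← hw i]
  simp only [Matrix.mulVecLin_apply, Matrix.mulVec, dotProduct, Fin.sum_univ_two, map_add, map_mul]
  ring

/-- `S/(z)` is the direct sum of the cokernels of the matrices of multiplication by `z` on the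
graded pieces. -/
lemma main_iso (p q : ℕ) (hp : 0 < p) (hq : 0 < q) :
    letI : Module Rpoly (Spoly ⧸ Ideal.span {zpol (p * q)}) :=
      ((Ideal.Quotient.mk (Ideal.span {zpol (p * q)})).comp (phi (p * q) q)).toModule
    Nonempty ((Spoly ⧸ Ideal.span {zpol (p * q)}) ≃ₗ[Rpoly]
      ((i : Idx p q) → coker (MM p i.1 i.2.1 (kk i)))) := by
  let _ : Module Rpoly (Spoly ⧸ Ideal.span {zpol (p * q)}) :=
    ((Ideal.Quotient.mk (Ideal.span {zpol (p * q)})).comp (phi (p * q) q)).toModule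
  let f : (Idx p q → Fin 2 → Rpoly) →ₗ[Rpoly] (Spoly ⧸ Ideal.span {zpol (p * q)}) :=
    { toFun := fun v => Ideal.Quotient.mk _ (Phi p q v)
      map_add' := fun v w => by rw [Phi_add, map_add]
      map_smul' := fun c v => by rw [Phi_smul, map_mul]; rfl }
  have hf : Function.Surjective f := by
    intro s
    obtain ⟨s, rfl⟩ := Ideal.Quotient.mk_surjective s
    obtain ⟨v, rfl⟩ := Phi_surj hp hq s
    exact ⟨v, rfl⟩
  have hker : LinearMap.ker f = Submodule.pi Set.univ
      (fun i : Idx p q => LinearMap.range (MM p i.1 i.2.1 (kk i)).mulVecLin) := by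
    ext v
    rw [LinearMap.mem_ker, Submodule.mem_pi]
    change Ideal.Quotient.mk _ (Phi p q v) = 0 ↔ _
    rw [Ideal.Quotient.eq_zero_iff_mem, Ideal.mem_span_singleton]
    constructor
    · rintro ⟨s, hs⟩ i -
      obtain ⟨w, hw, hw'⟩ := z_mul_mem hp hq s
      have : v - w = 0 := by
        apply Phi_inj hp hq
        have := Phi_add p q (v - w) w
        rw [sub_add_cancel, hs, hw'] at this
        simpa using this.symm
      rw [sub_eq_zero.mp this]
      exact hw i
    · exact fun h => Phi_mem hq v fun i => h i trivial
  exact ⟨(f.quotKerEquivOfSurjective hf).symm.trans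
    ((Submodule.quotEquivOfEq _ _ hker).trans (Submodule.quotientPi _))⟩

/-! ### Isomorphism of `R`-modules as a relation -/

/-- `M` and `N` are isomorphic `R`-modules. -/
abbrev Iso (M N : Type) [AddCommGroup M] [AddCommGroup N] [Module Rpoly M] [Module Rpoly N] :
    Prop := Nonempty (M ≃ₗ[Rpoly] N)

section Generic

variable {M N P Q : Type} [AddCommGroup M] [AddCommGroup N] [AddCommGroup P] [AddCommGroup Q]
  [Module Rpoly M] [Module Rpoly N] [Module Rpoly P] [Module Rpoly Q]

lemma iso_refl : Iso M M := ⟨LinearEquiv.refl _ _⟩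

lemma iso_symm : Iso M N → Iso N M := fun ⟨e⟩ => ⟨e.symm⟩

lemma iso_trans : Iso M N → Iso N P → Iso M P := fun ⟨e⟩ ⟨f⟩ => ⟨e.trans f⟩

lemma iso_prod : Iso M N → Iso P Q → Iso (M × P) (N × Q) :=
  fun ⟨e⟩ ⟨f⟩ => ⟨LinearEquiv.prodCongr e f⟩

lemma iso_pi {ι : Type} {C D : ι → Type} [∀ i, AddCommGroup (C i)] [∀ i, AddCommGroup (D i)]
    [∀ i, Module Rpoly (C i)] [∀ i, Module Rpoly (D i)] (h : ∀ i, Iso (C i) (D i)) :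
    Iso (∀ i, C i) (∀ i, D i) :=
  ⟨LinearEquiv.piCongrRight fun i => (h i).some⟩

lemma iso_pi_equiv {ι κ : Type} {D : ι → Type} {C : κ → Type} [∀ i, AddCommGroup (C i)]
    [∀ i, AddCommGroup (D i)] [∀ i, Module Rpoly (C i)] [∀ i, Module Rpoly (D i)] (e : ι ≃ κ)
    (h : ∀ i, Iso (D i) (C (e i))) : Iso (∀ i, D i) (∀ k, C k) :=
  iso_trans (iso_pi h) ⟨LinearEquiv.piCongrLeft Rpoly C e⟩

lemma iso_of_eq {ι : Type} {C : ι → Type} [∀ i, AddCommGroup (C i)] [∀ i, Module Rpoly (C i)]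
    {i j : ι} (h : i = j) : Iso (C i) (C j) := by
  subst h
  exact iso_refl

lemma iso_fun_card {ι κ : Type} [Fintype ι] [Fintype κ] (h : Fintype.card ι = Fintype.card κ) :
    Iso (ι → M) (κ → M) :=
  ⟨LinearEquiv.funCongrLeft Rpoly M (Fintype.equivOfCardEq h.symm)⟩

lemma iso_sum_arrow {ι κ : Type} : Iso (ι ⊕ κ → M) ((ι → M) × (κ → M)) :=
  ⟨LinearEquiv.sumArrowLequivProdArrow ι κ Rpoly M⟩

lemma iso_pi_prod {ι : Type} {C D : ι → Type} [∀ i, AddCommGroup (C i)] [∀ i, AddCommGroup (D i)]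
    [∀ i, Module Rpoly (C i)] [∀ i, Module Rpoly (D i)] :
    Iso (∀ i, C i × D i) ((∀ i, C i) × (∀ i, D i)) :=
  ⟨{ toFun := fun f => (fun i => (f i).1, fun i => (f i).2)
     invFun := fun f i => (f.1 i, f.2 i)
     map_add' := fun _ _ => rfl
     map_smul' := fun _ _ => rfl
     left_inv := fun _ => rfl
     right_inv := fun _ => rfl }⟩

lemma iso_pi_swap {ι κ : Type} {C : ι → κ → Type} [∀ i k, AddCommGroup (C i k)]
    [∀ i k, Module Rpoly (C i k)] : Iso (∀ i k, C i k) (∀ k i, C i k) :=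
  ⟨{ toFun := fun f k i => f i k
     invFun := fun f i k => f k i
     map_add' := fun _ _ => rfl
     map_smul' := fun _ _ => rfl
     left_inv := fun _ => rfl
     right_inv := fun _ => rfl }⟩

lemma iso_curry {ι κ : Type} {C : ι × κ → Type} [∀ i, AddCommGroup (C i)]
    [∀ i, Module Rpoly (C i)] : Iso (∀ i, C i) (∀ i k, C (i, k)) :=
  ⟨{ toFun := fun f i k => f (i, k)
     invFun := fun f i => f i.1 i.2
     map_add' := fun _ _ => rfl
     map_smul' := fun _ _ => rfl
     left_inv := fun _ => rfl
     right_inv := fun _ => rfl }⟩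

lemma iso_succ {n : ℕ} {C : Fin (n + 1) → Type} [∀ i, AddCommGroup (C i)]
    [∀ i, Module Rpoly (C i)] : Iso (∀ i, C i) (C 0 × ∀ i : Fin n, C i.succ) :=
  ⟨{ toFun := fun f => (f 0, fun i => f i.succ)
     invFun := fun f => Fin.cons f.1 f.2
     map_add' := fun _ _ => rfl
     map_smul' := fun _ _ => rfl
     left_inv := fun f => Fin.cons_self_tail f
     right_inv := fun _ => rfl }⟩

lemma iso_pair : Iso (M × M) (Fin 2 → M) := ⟨(LinearEquiv.finTwoArrow Rpoly M).symm⟩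

lemma iso_add {a b : ℕ} {C : ℕ → Type} [∀ i, AddCommGroup (C i)] [∀ i, Module Rpoly (C i)] :
    Iso (∀ k : Fin (a + b), C k) ((∀ k : Fin a, C k) × (∀ k : Fin b, C (a + k))) := by
  refine iso_trans (iso_symm (iso_pi_equiv (D := fun i : Fin a ⊕ Fin b =>
    C (finSumFinEquiv i : Fin (a + b))) finSumFinEquiv fun _ => iso_refl)) ?_
  exact ⟨{ toFun := fun f => (fun i => f (.inl i), fun i => f (.inr i))
           invFun := fun f i => match i with
             | .inl i => f.1 i
             | .inr i => f.2 i
           map_add' := fun _ _ => rfl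
           map_smul' := fun _ _ => rfl
           left_inv := fun f => by
             funext i
             cases i <;> rfl
           right_inv := fun _ => rfl }⟩

lemma iso_drop_left [Subsingleton M] : Iso (M × N) N :=
  ⟨{ toFun := fun f => f.2
     invFun := fun f => (0, f)
     map_add' := fun _ _ => rfl
     map_smul' := fun _ _ => rfl
     left_inv := fun _ => Prod.ext (Subsingleton.elim _ _) rfl
     right_inv := fun _ => rfl }⟩

end Generic

/-- If `C (2h+2-k) ≅ C k`, the product of `C 0, …, C (2h+1)` has the terms `k` and `2h+2-k` paired
for `1 ≤ k ≤ h`, and `C 0`, `C (h+1)` unpaired. -/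
lemma iso_palindrome (h : ℕ) (C : ℕ → Type) [∀ i, AddCommGroup (C i)] [∀ i, Module Rpoly (C i)]
    (hC : ∀ j < h, Iso (C (2 * h + 2 - (j + 1))) (C (j + 1))) :
    Iso (∀ k : Fin (2 * h + 2), C k)
      (C 0 × (∀ j : Fin h, Fin 2 → C ((j : ℕ) + 1)) × C (h + 1)) := by
  have e : 2 * h + 2 = h + 1 + (1 + h) := by omega
  refine iso_trans (iso_pi_equiv (C := fun k : Fin (h + 1 + (1 + h)) => C k) (finCongr e)
    fun i => iso_refl) ?_
  refine iso_trans iso_add ?_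
  refine iso_trans (iso_prod iso_succ (iso_add (C := fun k => C (h + 1 + k)))) ?_
  have h1 : Iso (∀ k : Fin 1, C (h + 1 + (k : ℕ))) (C (h + 1)) :=
    iso_trans (iso_pi fun k => iso_of_eq (by omega))
      ⟨LinearEquiv.funUnique (Fin 1) Rpoly (C (h + 1))⟩
  have h2 : Iso (∀ k : Fin h, C (h + 1 + (1 + (k : ℕ)))) (∀ j : Fin h, C ((j : ℕ) + 1)) := by
    refine iso_pi_equiv Fin.revPerm fun i => iso_trans (iso_of_eq ?_) (hC _ (Fin.revPerm i).2)
    have := i.2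
    simp [Fin.val_rev]
    omega
  refine iso_trans (iso_prod iso_refl (iso_prod h1 h2)) ?_
  refine iso_trans ?_ (iso_prod iso_refl (iso_prod (iso_pi fun j => iso_pair) iso_refl))
  refine iso_trans ?_ (iso_prod iso_refl (iso_prod (iso_symm iso_pi_prod) iso_refl))
  exact ⟨{ toFun := fun f => (f.1.1, (f.1.2, f.2.2), f.2.1)
           invFun := fun f => ((f.1, f.2.1.1), (f.2.2, f.2.1.2))
           map_add' := fun _ _ => rfl
           map_smul' := fun _ _ => rfl
           left_inv := fun _ => rfl
           right_inv := fun _ => rfl }⟩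

/-! ### Cokernels of 2×2 matrices -/

lemma mem_range_iff (a b c d : Rpoly) (v : Fin 2 → Rpoly) :
    v ∈ LinearMap.range (!![a, b; c, d]).mulVecLin ↔
      ∃ s t, v 0 = a * s + b * t ∧ v 1 = c * s + d * t := by
  constructor
  · rintro ⟨w, rfl⟩
    exact ⟨w 0, w 1, by simp [Matrix.mulVec, dotProduct], by simp [Matrix.mulVec, dotProduct]⟩
  · rintro ⟨s, t, h0, h1⟩
    refine ⟨![s, t], ?_⟩
    funext l
    fin_cases l
    · simp [Matrix.mulVec, dotProduct, h0]
    · simp [Matrix.mulVec, dotProduct, h1]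

lemma coker_of_ker {N : Type} [AddCommGroup N] [Module Rpoly N]
    (A : Matrix (Fin 2) (Fin 2) Rpoly) (f : (Fin 2 → Rpoly) →ₗ[Rpoly] N)
    (hf : Function.Surjective f) (hk : ∀ v, f v = 0 ↔ v ∈ LinearMap.range A.mulVecLin) :
    Iso (coker A) N := by
  have : LinearMap.range A.mulVecLin = LinearMap.ker f := by
    ext v
    rw [LinearMap.mem_ker, hk]
  exact ⟨(Submodule.quotEquivOfEq _ _ this).trans (f.quotKerEquivOfSurjective hf)⟩

/-- Reordering both bases of `R²`. -/
lemma coker_swap (a b c d : Rpoly) : Iso (coker !![a, b; c, d]) (coker !![d, c; b, a]) := by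
  refine coker_of_ker _ ((Submodule.mkQ _).comp
    (LinearMap.funLeft Rpoly Rpoly (Equiv.swap (0 : Fin 2) 1))) ?_ ?_
  · refine (Submodule.mkQ_surjective _).comp ?_
    exact LinearMap.funLeft_surjective_of_injective _ _ _ (Equiv.injective _)
  · intro v
    rw [LinearMap.comp_apply, Submodule.mkQ_apply, Submodule.Quotient.mk_eq_zero, mem_range_iff,
      mem_range_iff]
    simp only [LinearMap.funLeft_apply, Equiv.swap_apply_left, Equiv.swap_apply_right]
    constructor
    · rintro ⟨s, t, h0, h1⟩
      exact ⟨t, s, by rw [h1]; ring, by rw [h0]; ring⟩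
    · rintro ⟨s, t, h0, h1⟩
      exact ⟨t, s, by rw [h1]; ring, by rw [h0]; ring⟩

/-- Coordinates `(l₀, l₁)` on `R²`, reduced modulo `f` and `g`. -/
def prodMap (l₀ l₁ : (Fin 2 → Rpoly) →ₗ[Rpoly] Rpoly) (f g : Rpoly) :
    (Fin 2 → Rpoly) →ₗ[Rpoly] (Rpoly ⧸ Ideal.span {f}) × (Rpoly ⧸ Ideal.span {g}) :=
  ((Submodule.mkQ _).comp l₀).prod ((Submodule.mkQ _).comp l₁)

lemma prodMap_surj (l₀ l₁ : (Fin 2 → Rpoly) →ₗ[Rpoly] Rpoly) (f g : Rpoly)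
    (h : ∀ a b, ∃ v, l₀ v = a ∧ l₁ v = b) : Function.Surjective (prodMap l₀ l₁ f g) := by
  rintro ⟨a, b⟩
  obtain ⟨a, rfl⟩ := Submodule.mkQ_surjective _ a
  obtain ⟨b, rfl⟩ := Submodule.mkQ_surjective _ b
  obtain ⟨v, rfl, rfl⟩ := h a b
  exact ⟨v, rfl⟩

lemma prodMap_eq_zero (l₀ l₁ : (Fin 2 → Rpoly) →ₗ[Rpoly] Rpoly) (f g : Rpoly) (v) :
    prodMap l₀ l₁ f g v = 0 ↔ f ∣ l₀ v ∧ g ∣ l₁ v := by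
  rw [← Ideal.mem_span_singleton, ← Ideal.mem_span_singleton, Prod.ext_iff]
  exact and_congr (Submodule.Quotient.mk_eq_zero _) (Submodule.Quotient.mk_eq_zero _)

/-- The linear form `v ↦ a v₀ + b v₁` on `R²`. -/
abbrev lin (a b : Rpoly) : (Fin 2 → Rpoly) →ₗ[Rpoly] Rpoly :=
  a • LinearMap.proj 0 + b • LinearMap.proj 1

lemma lin_apply (a b : Rpoly) (v) : lin a b v = a * v 0 + b * v 1 := rfl

lemma half : (2 : Rpoly) * C (1 / 2) = 1 := by
  have : (2 : Rpoly) = C 2 := rfl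
  rw [this, ← C_mul]
  norm_num

/-- The coordinates `v₀ ∓ v₁` diagonalise `[[a, b], [b, a]]`, since `2` is invertible. -/
lemma coker_sym (a b : Rpoly) : Iso (coker !![a, b; b, a])
    ((Rpoly ⧸ Ideal.span {a - b}) × (Rpoly ⧸ Ideal.span {a + b})) := by
  refine coker_of_ker _ (prodMap (lin 1 (-1)) (lin 1 1) _ _) (prodMap_surj _ _ _ _ ?_) ?_
  · intro s t
    refine ⟨![C (1 / 2) * (s + t), C (1 / 2) * (t - s)], ?_, ?_⟩
    · simp only [lin_apply, Matrix.cons_val_zero, Matrix.cons_val_one]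
      linear_combination s * half
    · simp only [lin_apply, Matrix.cons_val_zero, Matrix.cons_val_one]
      linear_combination t * half
  · intro v
    rw [prodMap_eq_zero, mem_range_iff, lin_apply, lin_apply]
    constructor
    · rintro ⟨⟨s, hs⟩, ⟨t, ht⟩⟩
      refine ⟨C (1 / 2) * (s + t), C (1 / 2) * (t - s), ?_, ?_⟩
      · linear_combination C (1 / 2) * (hs + ht) - v 0 * half
      · linear_combination C (1 / 2) * (ht - hs) - v 1 * half
    · rintro ⟨s, t, h0, h1⟩
      exact ⟨⟨s - t, by rw [h0, h1]; ring⟩, ⟨s + t, by rw [h0, h1]; ring⟩⟩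

/-- Elimination with the unit `b` reduces `u • [[a, b], [c, a]]` to the diagonal matrix
`(u, u (a² - bc))`. -/
lemma coker_unit (u a b b' c : Rpoly) (hb : b * b' = 1) : Iso (coker !![u * a, u * b; u * c, u * a])
    ((Rpoly ⧸ Ideal.span {u}) × (Rpoly ⧸ Ideal.span {u * (a ^ 2 - b * c)})) := by
  refine coker_of_ker _ (prodMap (lin 1 0) (lin (-a * b') 1) _ _) (prodMap_surj _ _ _ _ ?_) ?_
  · intro s t
    refine ⟨![s, t + a * b' * s], ?_, ?_⟩
    · simp
    · simp only [lin_apply, Matrix.cons_val_zero, Matrix.cons_val_one]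
      ring
  · intro v
    rw [prodMap_eq_zero, mem_range_iff, lin_apply, lin_apply]
    constructor
    · rintro ⟨⟨s, hs⟩, ⟨t, ht⟩⟩
      -- solve `v = A (w₀, w₁)` with `w₀ = -b t`, using that `b` is invertible
      refine ⟨-b * t, b' * s + a * t, ?_, ?_⟩
      · linear_combination hs - u * s * hb
      · linear_combination ht + a * b' * hs
    · rintro ⟨s, t, h0, h1⟩
      refine ⟨⟨a * s + b * t, by rw [h0]; ring⟩, ⟨-b' * s, ?_⟩⟩
      rw [h0, h1]
      linear_combination (-u * a * t - u * c * s) * hb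

/-! ### Identification of the summands -/

lemma coker_xi_left {p j k : ℕ} : Iso (coker (MM p 0 (j + 1) k)) (coker (xiM p (k + 1))) := by
  refine iso_trans (coker_swap _ _ _ _) (iso_of_eq (C := coker) ?_)
  simp [xiM, ee_zero, ee_succ, mul_comm, add_comm]

lemma coker_xi_right {p i k : ℕ} (hk : k < p) :
    Iso (coker (MM p (i + 1) 0 (k + 1))) (coker (xiM p (p - 1 - k + 1))) := by
  refine iso_of_eq (C := coker) ?_
  have h1 : 1 + (p - (k + 1)) = p - 1 - k + 1 := by omega
  have h2 : p + 1 - (p - 1 - k + 1) = k + 1 := by omega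
  simp [MM, xiM, ee_zero, ee_succ, h1, h2, mul_comm]

lemma coker_phi_left {p i j k : ℕ} :
    Iso (coker (MM p (i + 1) (j + 1) k)) (coker (phiM p k)) := by
  refine iso_trans (coker_swap _ _ _ _) (iso_of_eq (C := coker) ?_)
  simp [phiM, ee_succ]

lemma coker_phi_right {p i j k : ℕ} (hk : k < p) :
    Iso (coker (MM p (i + 1) (j + 1) (k + 1))) (coker (phiM p (p - 1 - k))) := by
  refine iso_of_eq (C := coker) ?_
  have h1 : p - (k + 1) = p - 1 - k := by omega
  have h2 : p - (p - 1 - k) = k + 1 := by omega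
  simp [MM, phiM, ee_succ, h1, h2]

/-- Changing the sign of the second vector in both bases of `R²`. -/
lemma coker_neg (a b c d : Rpoly) : Iso (coker !![a, b; c, d]) (coker !![a, -b; -c, d]) := by
  refine coker_of_ker _ ((Submodule.mkQ _).comp
    (LinearMap.pi ![lin 1 0, lin 0 (-1)])) ?_ ?_
  · refine (Submodule.mkQ_surjective _).comp ?_
    intro v
    refine ⟨![v 0, -v 1], ?_⟩
    funext l
    fin_cases l <;> simp
  · intro v
    rw [LinearMap.comp_apply, Submodule.mkQ_apply, Submodule.Quotient.mk_eq_zero, mem_range_iff,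
      mem_range_iff]
    simp only [LinearMap.pi_apply, Matrix.cons_val_zero, Matrix.cons_val_one, lin_apply]
    constructor
    · rintro ⟨s, t, h0, h1⟩
      exact ⟨s, -t, by linear_combination h0, by linear_combination -h1⟩
    · rintro ⟨s, t, h0, h1⟩
      exact ⟨s, -t, by linear_combination h0, by linear_combination -h1⟩

lemma coker_psi {p k : ℕ} (hk : k ≤ p) : Iso (coker (MM p 0 0 k)) (coker (psiM p k)) := by
  refine iso_trans (coker_swap _ _ _ _) (iso_trans (coker_neg _ _ _ _)
    (iso_of_eq (C := coker) ?_))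
  have h1 : 1 + (p - k) = p + 1 - k := by omega
  simp [psiM, ee_zero, h1, mul_comm, add_comm]

lemma phi_palindrome {p k : ℕ} (hk : k ≤ p) : Iso (coker (phiM p (p - k))) (coker (phiM p k)) := by
  refine iso_trans (coker_swap _ _ _ _) (iso_of_eq (C := coker) ?_)
  have h1 : p - (p - k) = k := by omega
  simp [phiM, h1]

lemma psi_palindrome {p k : ℕ} (hk : k ≤ p) : Iso (coker (psiM p (p - k))) (coker (psiM p k)) := by
  refine iso_trans (coker_swap _ _ _ _) (iso_of_eq (C := coker) ?_)
  have h1 : p + 1 - (p - k) = k + 1 := by omega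
  have h2 : p - k + 1 = p + 1 - k := by omega
  simp [psiM, h1, h2]

lemma phi_zero (p : ℕ) : Iso (coker (phiM p 0)) (Rpoly ⧸ Ideal.span {Yv ^ 2 - 4 * Xv ^ p}) := by
  have h1 : phiM p 0 = !![1 * Yv, 1 * 2; 1 * (2 * Xv ^ p), 1 * Yv] := by simp [phiM]
  have h2 : Yv ^ 2 - 4 * Xv ^ p = 1 * (Yv ^ 2 - 2 * (2 * Xv ^ p)) := by ring
  rw [h1, h2]
  have : Subsingleton (Rpoly ⧸ Ideal.span {(1 : Rpoly)}) := by
    rw [Ideal.span_singleton_one]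
    infer_instance
  exact iso_trans (coker_unit _ _ _ _ _ half) iso_drop_left

lemma psi_zero (p : ℕ) : Iso (coker (psiM p 0)) ((Rpoly ⧸ Ideal.span {Xv}) ×
    (Rpoly ⧸ Ideal.span {Xv * (Yv ^ 2 - 4 * Xv ^ p)})) := by
  have h1 : psiM p 0 = !![Xv * Yv, Xv * (-2); Xv * (-2 * Xv ^ p), Xv * Yv] := by
    simp only [psiM, tsub_zero]
    congr! 2
    · ring_nf
    · ring_nf
  have h2 : Xv * (Yv ^ 2 - 4 * Xv ^ p) = Xv * (Yv ^ 2 - (-2) * (-2 * Xv ^ p)) := by ring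
  rw [h1, h2]
  exact coker_unit _ _ _ (-C (1 / 2)) _ (by linear_combination half)

lemma phi_mid (h : ℕ) : Iso (coker (phiM (2 * h + 2) (h + 1)))
    ((Rpoly ⧸ Ideal.span {Yv - 2 * Xv ^ (h + 1)}) ×
    (Rpoly ⧸ Ideal.span {Yv + 2 * Xv ^ (h + 1)})) := by
  have : 2 * h + 2 - (h + 1) = h + 1 := by omega
  rw [phiM, this]
  exact coker_sym _ _

lemma psi_mid (h : ℕ) : Iso (coker (psiM (2 * h + 2) (h + 1)))
    ((Rpoly ⧸ Ideal.span {Xv * (Yv + 2 * Xv ^ (h + 1))}) ×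
    (Rpoly ⧸ Ideal.span {Xv * (Yv - 2 * Xv ^ (h + 1))})) := by
  have h0 : 2 * h + 2 + 1 - (h + 1) = h + 1 + 1 := by omega
  have h1 : Xv * (Yv + 2 * Xv ^ (h + 1)) = Xv * Yv - -2 * Xv ^ (h + 1 + 1) := by ring
  have h2 : Xv * (Yv - 2 * Xv ^ (h + 1)) = Xv * Yv + -2 * Xv ^ (h + 1 + 1) := by ring
  rw [psiM, h0, h1, h2]
  exact coker_sym _ _

/-! ### Assembling the decomposition -/

/-- Splitting the product according to whether `r` and `s` vanish. -/
lemma iso_split {n p : ℕ} (C : ℕ → ℕ → ℕ → Type) [∀ r s k, AddCommGroup (C r s k)]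
    [∀ r s k, Module Rpoly (C r s k)] :
    Iso (∀ i : Idx p (n + 1), C i.1 i.2.1 i.2.2)
      (((∀ k : Fin p, C 0 0 k) × (∀ (j : Fin n) (k : Fin p), C 0 ((j : ℕ) + 1) k)) ×
        (∀ (i : Fin n) (k : Fin p), C ((i : ℕ) + 1) 0 k) ×
        (∀ (i : Fin n) (j : Fin n) (k : Fin p), C ((i : ℕ) + 1) ((j : ℕ) + 1) k)) := by
  refine iso_trans iso_curry (iso_trans (iso_pi fun r => iso_curry) ?_)
  refine iso_trans iso_succ ?_
  exact iso_prod iso_succ (iso_trans (iso_pi fun r => iso_succ) iso_pi_prod)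

/-- The contribution of `r = s = 0`. -/
lemma iso_psi_part (h : ℕ) :
    Iso (∀ k : Fin (2 * h + 2), coker (MM (2 * h + 2) 0 0 k))
      (((Rpoly ⧸ Ideal.span {Xv}) ×
        (Rpoly ⧸ Ideal.span {Xv * (Yv ^ 2 - 4 * Xv ^ (2 * h + 2))})) ×
      ((j : Fin h) → Fin 2 → coker (psiM (2 * h + 2) ((j : ℕ) + 1))) ×
      ((Rpoly ⧸ Ideal.span {Xv * (Yv + 2 * Xv ^ (h + 1))}) ×
        (Rpoly ⧸ Ideal.span {Xv * (Yv - 2 * Xv ^ (h + 1))}))) := by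
  refine iso_trans (iso_pi fun k => coker_psi k.2.le) ?_
  refine iso_trans (iso_palindrome h (fun k => coker (psiM (2 * h + 2) k))
    fun j hj => psi_palindrome (by omega)) ?_
  exact iso_prod (psi_zero _) (iso_prod iso_refl (psi_mid h))

/-- The contribution of the pairs `(r, s)` with exactly one zero entry. -/
lemma iso_xi_part (n p : ℕ) :
    Iso ((∀ (j : Fin n) (k : Fin p), coker (MM p 0 ((j : ℕ) + 1) k)) ×
        (∀ (i : Fin n) (k : Fin p), coker (MM p ((i : ℕ) + 1) 0 ((k : ℕ) + 1))))
      ((j : Fin p) → Fin (2 * n) → coker (xiM p ((j : ℕ) + 1))) := by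
  have h1 : Iso (∀ (j : Fin n) (k : Fin p), coker (MM p 0 ((j : ℕ) + 1) k))
      (Fin n → ∀ k : Fin p, coker (xiM p ((k : ℕ) + 1))) :=
    iso_pi fun j => iso_pi fun k => coker_xi_left
  have h2 : Iso (∀ (i : Fin n) (k : Fin p), coker (MM p ((i : ℕ) + 1) 0 ((k : ℕ) + 1)))
      (Fin n → ∀ k : Fin p, coker (xiM p ((k : ℕ) + 1))) := by
    refine iso_pi fun i => iso_pi_equiv Fin.revPerm fun k =>
      iso_trans (coker_xi_right k.2) (iso_of_eq (C := coker) ?_)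
    have : p - 1 - (k : ℕ) = p - (k + 1) := by omega
    rw [Fin.revPerm_apply, Fin.val_rev, this]
  refine iso_trans (iso_prod h1 h2) ?_
  refine iso_trans (iso_symm iso_sum_arrow) ?_
  refine iso_trans (iso_fun_card (κ := Fin (2 * n)) ?_) iso_pi_swap
  simp
  ring

lemma iso_phi_cell_left (p i j : ℕ) : Iso (∀ k : Fin p, coker (MM p (i + 1) (j + 1) k))
    (∀ k : Fin p, coker (phiM p k)) :=
  iso_pi fun _ => coker_phi_left

lemma iso_phi_cell_right (p i j : ℕ) :
    Iso (∀ k : Fin p, coker (MM p (i + 1) (j + 1) ((k : ℕ) + 1)))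
      (∀ k : Fin p, coker (phiM p k)) := by
  refine iso_pi_equiv Fin.revPerm fun k =>
    iso_trans (coker_phi_right k.2) (iso_of_eq (C := coker) ?_)
  have : p - 1 - (k : ℕ) = p - (k + 1) := by omega
  rw [Fin.revPerm_apply, Fin.val_rev, this]

/-- The contribution of a single pair `(i + 1, j + 1)` of non-zero `r`, `s`. -/
lemma iso_phi_cell (h i j : ℕ) :
    Iso (∀ k : Fin (2 * h + 2),
        coker (MM (2 * h + 2) (i + 1) (j + 1) (k + if j + 1 < i + 1 then 1 else 0)))
      ((Rpoly ⧸ Ideal.span {Yv ^ 2 - 4 * Xv ^ (2 * h + 2)}) ×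
      ((j : Fin h) → Fin 2 → coker (phiM (2 * h + 2) ((j : ℕ) + 1))) ×
      coker (phiM (2 * h + 2) (h + 1))) := by
  have h1 : Iso (∀ k : Fin (2 * h + 2),
        coker (MM (2 * h + 2) (i + 1) (j + 1) (k + if j + 1 < i + 1 then 1 else 0)))
      (∀ k : Fin (2 * h + 2), coker (phiM (2 * h + 2) k)) := by
    generalize hc : (if j + 1 < i + 1 then 1 else 0) = c
    have hc' : c = 0 ∨ c = 1 := by
      rw [← hc]
      split_ifs
      · exact Or.inr rfl
      · exact Or.inl rfl
    clear hc
    rcases hc' with rfl | rfl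
    · exact iso_phi_cell_left _ _ _
    · exact iso_phi_cell_right _ _ _
  refine iso_trans h1 ?_
  refine iso_trans (iso_palindrome h (fun k => coker (phiM (2 * h + 2) k))
    fun j hj => phi_palindrome (by omega)) ?_
  exact iso_prod (phi_zero _) iso_refl

lemma sq_eq (n : ℕ) : n * n = 2 * n.choose 2 + n := by
  have h1 : 2 * n.choose 2 = n * (n - 1) := by
    rw [Nat.choose_two_right, Nat.mul_div_cancel' (Nat.even_mul_pred_self n).two_dvd]
  rw [h1]
  rcases n with _ | n
  · rfl
  · simp
    ring

/-- The contribution of all pairs with `r, s > 0`. Of the `n²` copies of `Coker φ_(p/2)`, `n` are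
split into cyclic modules. -/
lemma iso_phi_part (h n : ℕ) :
    Iso (∀ (i j : Fin n) (k : Fin (2 * h + 2)), coker (MM (2 * h + 2) ((i : ℕ) + 1) ((j : ℕ) + 1)
        (k + if (j : ℕ) + 1 < i + 1 then 1 else 0)))
      ((Fin (n + 2 * n.choose 2) → Rpoly ⧸ Ideal.span {Yv ^ 2 - 4 * Xv ^ (2 * h + 2)}) ×
      ((j : Fin h) → Fin (2 * n ^ 2) → coker (phiM (2 * h + 2) ((j : ℕ) + 1))) ×
      (Fin (2 * n.choose 2) → coker (phiM (2 * h + 2) (h + 1))) ×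
      (Fin n → Rpoly ⧸ Ideal.span {Yv - 2 * Xv ^ (h + 1)}) ×
      (Fin n → Rpoly ⧸ Ideal.span {Yv + 2 * Xv ^ (h + 1)})) := by
  refine iso_trans (iso_pi fun i => iso_pi fun j => iso_phi_cell h i j) ?_
  refine iso_trans (iso_symm (iso_curry (ι := Fin n) (κ := Fin n)
    (C := fun _ => (Rpoly ⧸ Ideal.span {Yv ^ 2 - 4 * Xv ^ (2 * h + 2)}) ×
      ((j : Fin h) → Fin 2 → coker (phiM (2 * h + 2) ((j : ℕ) + 1))) ×
      coker (phiM (2 * h + 2) (h + 1))))) ?_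
  refine iso_trans iso_pi_prod (iso_prod (iso_fun_card ?_)
    (iso_trans iso_pi_prod (iso_prod ?_ ?_)))
  · simp [sq_eq, add_comm]
  · refine iso_trans iso_pi_swap (iso_pi fun j => ?_)
    refine iso_trans (iso_symm (iso_curry (ι := Fin n × Fin n) (κ := Fin 2)
      (C := fun _ => coker (phiM (2 * h + 2) ((j : ℕ) + 1))))) (iso_fun_card ?_)
    simp
    ring
  · refine iso_trans (iso_fun_card (κ := Fin (2 * n.choose 2) ⊕ Fin n) (by simp [sq_eq])) ?_
    refine iso_trans iso_sum_arrow (iso_prod iso_refl ?_)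
    exact iso_trans (iso_pi fun _ => phi_mid h) iso_pi_prod

lemma iso_shuffle {Q₁ Q₂ Q₃ Q₄ P B B' D F G T T' : Type}
    [AddCommGroup Q₁] [AddCommGroup Q₂] [AddCommGroup Q₃] [AddCommGroup Q₄] [AddCommGroup P]
    [AddCommGroup B] [AddCommGroup B'] [AddCommGroup D] [AddCommGroup F] [AddCommGroup G]
    [AddCommGroup T] [AddCommGroup T']
    [Module Rpoly Q₁] [Module Rpoly Q₂] [Module Rpoly Q₃] [Module Rpoly Q₄] [Module Rpoly P]
    [Module Rpoly B] [Module Rpoly B'] [Module Rpoly D] [Module Rpoly F] [Module Rpoly G]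
    [Module Rpoly T] [Module Rpoly T'] {Xi : Type} [AddCommGroup Xi] [Module Rpoly Xi]
    (hXi : Iso (B × B') Xi) :
    Iso ((((Q₁ × Q₂) × P × (Q₃ × Q₄)) × B) × B' × (D × F × G × T × T'))
      (Xi × P × F × G × Q₁ × D × Q₃ × Q₄ × T × T' × Q₂) := by
  refine iso_trans ?_ (iso_prod hXi iso_refl)
  exact ⟨{ toFun := fun ⟨⟨⟨⟨q₁, q₂⟩, p, q₃, q₄⟩, b⟩, b', d, f, g, t, t'⟩ =>
             ((b, b'), p, f, g, q₁, d, q₃, q₄, t, t', q₂)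
           invFun := fun ⟨⟨b, b'⟩, p, f, g, q₁, d, q₃, q₄, t, t', q₂⟩ =>
             ((((q₁, q₂), p, q₃, q₄), b), b', d, f, g, t, t')
           map_add' := fun _ _ => rfl
           map_smul' := fun _ _ => rfl
           left_inv := fun _ => rfl
           right_inv := fun _ => rfl }⟩

set_option synthInstance.maxHeartbeats 1600000 in
set_option maxHeartbeats 1600000 in
theorem stmt8 (p q : ℕ) (hp : 2 ≤ p) (hpe : Even p) (hq : 2 ≤ q) :
    letI : Module Rpoly (Spoly ⧸ Ideal.span {zpol (p * q)}) :=
      ((Ideal.Quotient.mk (Ideal.span {zpol (p * q)})).comp (phi (p * q) q)).toModule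
    Nonempty ((Spoly ⧸ Ideal.span {zpol (p * q)}) ≃ₗ[Rpoly]
      ((j : Fin p) → Fin (2 * (q - 1)) → coker (xiM p ((j : ℕ) + 1))) ×
      ((j : Fin ((p - 2) / 2)) → Fin 2 → coker (psiM p ((j : ℕ) + 1))) ×
      ((j : Fin ((p - 2) / 2)) → Fin (2 * (q - 1) ^ 2) → coker (phiM p ((j : ℕ) + 1))) ×
      (Fin (2 * Nat.choose (q - 1) 2) → coker (phiM p (p / 2))) ×
      (Rpoly ⧸ Ideal.span {Xv}) ×
      (Fin ((q - 1) + 2 * Nat.choose (q - 1) 2) → Rpoly ⧸ Ideal.span {Yv ^ 2 - 4 * Xv ^ p}) ×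
      (Rpoly ⧸ Ideal.span {Xv * (Yv + 2 * Xv ^ (p / 2))}) ×
      (Rpoly ⧸ Ideal.span {Xv * (Yv - 2 * Xv ^ (p / 2))}) ×
      (Fin (q - 1) → Rpoly ⧸ Ideal.span {Yv - 2 * Xv ^ (p / 2)}) ×
      (Fin (q - 1) → Rpoly ⧸ Ideal.span {Yv + 2 * Xv ^ (p / 2)}) ×
      (Rpoly ⧸ Ideal.span {Xv * (Yv ^ 2 - 4 * Xv ^ p)})) := by
  obtain ⟨h, rfl⟩ : ∃ h, p = 2 * h + 2 := by
    obtain ⟨c, rfl⟩ := hpe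
    exact ⟨c - 1, by omega⟩
  obtain ⟨n, rfl⟩ : ∃ n, q = n + 1 := ⟨q - 1, by omega⟩
  have e1 : (2 * h + 2 - 2) / 2 = h := by omega
  have e2 : (2 * h + 2) / 2 = h + 1 := by omega
  have e3 : n + 1 - 1 = n := rfl
  rw [e1, e2, e3]
  obtain ⟨e⟩ := main_iso (2 * h + 2) (n + 1) (by omega) (by omega)
  have hsplit := iso_split (n := n) (p := 2 * h + 2)
    (fun r s k => coker (MM (2 * h + 2) r s (k + if s < r then 1 else 0)))
  have hparts := iso_prod (iso_prod (iso_psi_part h) (iso_refl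
      (M := ∀ (j : Fin n) (k : Fin (2 * h + 2)), coker (MM (2 * h + 2) 0 ((j : ℕ) + 1) k))))
    (iso_prod (iso_refl (M := ∀ (i : Fin n) (k : Fin (2 * h + 2)),
      coker (MM (2 * h + 2) ((i : ℕ) + 1) 0 ((k : ℕ) + 1)))) (iso_phi_part h n))
  obtain ⟨e'⟩ := iso_trans hsplit (iso_trans hparts (iso_shuffle (iso_xi_part n (2 * h + 2))))
  exact ⟨e.trans e'⟩
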